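/- arXiv:1804.10802 — 3 statements merged into one kernel-verified Lean document; each statement's English description precedes it below -/
import Mathlib

section
/- Let α be a type and let A and B be palindromic lists over α, each of even length. Let n ≥ 1 be such that d(n) is odd, write T(n) = (Λ_1, …, Λ_N), and set k = (d(n)+1)/2. Then the list ⌈Λ_k⌉ ⊕ Λ_{k+1} ⊕ … ⊕ Λ_N ⊕ Λ_1 ⊕ … ⊕ Λ_{k−1} ⊕ ⌊Λ_k⌋ is palindromic. -/
/-- Stern's diatomic sequence. -/
def stern : ℕ → ℕ
  | 0 => 0
  | 1 => 1
  | n + 2 =>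
    if (n + 2) % 2 = 0 then stern ((n + 2) / 2)
    else stern ((n + 2) / 2) + stern ((n + 2) / 2 + 1)
decreasing_by all_goals omega

/-- OEIS A003602: a(1)=1, a(2n)=a(n), a(2n+1)=n+1. (a(0)=0 as junk value.) -/
def aseq : ℕ → ℕ
  | 0 => 0
  | 1 => 1
  | n + 2 =>
    if (n + 2) % 2 = 0 then aseq ((n + 2) / 2)
    else (n + 2) / 2 + 1
decreasing_by all_goals omega

-- the modified sequence `a*`: zero at powers of two.
open Classical in
noncomputable def aStar (j : ℕ) : ℕ :=
  if ∃ k, j = 2 ^ k then 0 else aseq j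

theorem aseq_le (n : ℕ) : aseq n ≤ n := by
  induction n using Nat.strong_induction_on with
  | _ n ih =>
    match n with
    | 0 => simp [aseq]
    | 1 => simp [aseq]
    | m + 2 =>
      rw [aseq]
      split
      · exact le_trans (ih ((m + 2) / 2) (by omega)) (by omega)
      · omega

theorem aStar_le (j : ℕ) : aStar j ≤ j := by
  unfold aStar
  split
  · omega
  · exact aseq_le j

/-- The Markov-type sequence `S_{A,B}(n)`. -/
noncomputable def mseq {α : Type*} (A B : List α) : ℕ → List α
  | 0 => A
  | 1 => B
  | 2 => A ++ B
  | n + 3 =>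
    if (n + 3) % 2 = 0 then
      mseq A B ((n + 3) / 2) ++ mseq A B (aseq ((n + 3) / 2))
    else
      mseq A B (aStar ((n + 4) / 2 - 1)) ++ mseq A B ((n + 4) / 2)
decreasing_by
  all_goals first
    | omega
    | exact lt_of_le_of_lt (aseq_le _) (by omega)
    | exact lt_of_le_of_lt (aStar_le _) (by omega)

/-- The block decomposition `T(n)` of `S_{A,B}(n)`. -/
noncomputable def blockSeq {α : Type*} (A B : List α) : ℕ → List (List α)
  | 0 => [A]
  | 1 => [B]
  | 2 => [A, B]
  | n + 3 =>
    if (n + 3) % 2 = 0 then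
      blockSeq A B ((n + 3) / 2) ++ blockSeq A B (aseq ((n + 3) / 2))
    else
      blockSeq A B (aStar ((n + 4) / 2 - 1)) ++ blockSeq A B ((n + 4) / 2)
decreasing_by
  all_goals first
    | omega
    | exact lt_of_le_of_lt (aseq_le _) (by omega)
    | exact lt_of_le_of_lt (aStar_le _) (by omega)

theorem aseq_two_mul (j : ℕ) (hj : 1 ≤ j) : aseq (2 * j) = aseq j := by
  obtain ⟨m, rfl⟩ : ∃ m, j = m + 1 := ⟨j - 1, by omega⟩
  rw [show 2 * (m + 1) = 2 * m + 2 by ring, aseq, if_pos (by omega)]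
  congr 1; omega

theorem aseq_odd (j : ℕ) : aseq (2 * j + 1) = j + 1 := by
  rcases j with _ | m
  · simp [aseq]
  · rw [show 2 * (m + 1) + 1 = (2 * m + 1) + 2 by ring, aseq, if_neg (by omega)]
    omega

theorem stern_two_mul (j : ℕ) (hj : 1 ≤ j) : stern (2 * j) = stern j := by
  obtain ⟨m, rfl⟩ : ∃ m, j = m + 1 := ⟨j - 1, by omega⟩
  rw [show 2 * (m + 1) = 2 * m + 2 by ring, stern, if_pos (by omega)]
  congr 1; omega

theorem stern_odd (j : ℕ) (hj : 1 ≤ j) : stern (2 * j + 1) = stern j + stern (j + 1) := by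
  obtain ⟨m, rfl⟩ : ∃ m, j = m + 1 := ⟨j - 1, by omega⟩
  rw [show 2 * (m + 1) + 1 = (2 * m + 1) + 2 by ring, stern, if_neg (by omega),
    show (2 * m + 1 + 2) / 2 = m + 1 by omega]

theorem aStar_two_mul (j : ℕ) (hj : 1 ≤ j) : aStar (2 * j) = aStar j := by
  have h : (∃ k, 2 * j = 2 ^ k) ↔ ∃ k, j = 2 ^ k := by
    constructor
    · rintro ⟨k, hk⟩
      rcases k with _ | k
      · omega
      · exact ⟨k, by rw [pow_succ] at hk; omega⟩
    · rintro ⟨k, hk⟩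
      exact ⟨k + 1, by rw [pow_succ]; omega⟩
  unfold aStar
  rw [aseq_two_mul j hj]
  by_cases h' : ∃ k, j = 2 ^ k
  · rw [if_pos h', if_pos (h.2 h')]
  · rw [if_neg h', if_neg (fun q => h' (h.1 q))]

theorem aStar_odd (j : ℕ) (hj : 1 ≤ j) : aStar (2 * j + 1) = j + 1 := by
  have h : ¬ ∃ k, 2 * j + 1 = 2 ^ k := by
    rintro ⟨k, hk⟩
    rcases k with _ | k
    · rw [pow_zero] at hk; omega
    · rw [pow_succ] at hk; omega
  unfold aStar
  rw [if_neg h, aseq_odd]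

theorem aStar_one : aStar 1 = 0 := by
  unfold aStar
  rw [if_pos ⟨0, by simp⟩]

theorem blockSeq_even {α : Type*} (A B : List α) (j : ℕ) (hj : 2 ≤ j) :
    blockSeq A B (2 * j) = blockSeq A B j ++ blockSeq A B (aseq j) := by
  obtain ⟨m, rfl⟩ : ∃ m, j = m + 2 := ⟨j - 2, by omega⟩
  rw [show 2 * (m + 2) = (2 * m + 1) + 3 by ring, blockSeq, if_pos (by omega),
    show (2 * m + 1 + 3) / 2 = m + 2 by omega]

theorem blockSeq_odd {α : Type*} (A B : List α) (j : ℕ) (hj : 1 ≤ j) :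
    blockSeq A B (2 * j + 1) = blockSeq A B (aStar j) ++ blockSeq A B (j + 1) := by
  obtain ⟨m, rfl⟩ : ∃ m, j = m + 1 := ⟨j - 1, by omega⟩
  rw [show 2 * (m + 1) + 1 = (2 * m) + 3 by ring, blockSeq, if_neg (by omega),
    show (2 * m + 4) / 2 = m + 2 by omega]
  simp

theorem blockSeq_mem {α : Type*} (A B : List α) (n : ℕ) :
    ∀ x ∈ blockSeq A B n, x = A ∨ x = B := by
  induction n using Nat.strong_induction_on with
  | _ n ih =>
    match n, ih with
    | 0, _ => simp [blockSeq]
    | 1, _ => simp [blockSeq]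
    | 2, _ => simp [blockSeq]
    | m + 3, ih =>
      intro x hx
      rw [blockSeq] at hx
      split at hx
      · rcases List.mem_append.1 hx with h | h
        · exact ih _ (by omega) x h
        · exact ih _ (lt_of_le_of_lt (aseq_le _) (by omega)) x h
      · rcases List.mem_append.1 hx with h | h
        · exact ih _ (lt_of_le_of_lt (aStar_le _) (by omega)) x h
        · exact ih _ (by omega) x h

/-- The inductive invariant: `T(n+1) = P ++ Q` with `P`, `Q` palindromes, etc. -/
theorem block_inv {α : Type*} (A B : List α) (n : ℕ) (hn : 1 ≤ n) :
    ∃ P Q : List (List α), blockSeq A B (n + 1) = P ++ Q ∧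
      P.length = stern (n + 1) ∧ Q.length = stern n ∧
      P.reverse = P ∧ Q.reverse = Q ∧
      (blockSeq A B (aStar n) ++ P).reverse = blockSeq A B (aStar n) ++ P ∧
      (Q ++ blockSeq A B (aseq (n + 1))).reverse = Q ++ blockSeq A B (aseq (n + 1)) ∧
      (blockSeq A B (aStar n)).length = stern n ∧
      (blockSeq A B (aseq (n + 1))).length = stern (n + 1) := by
  induction n using Nat.strong_induction_on with
  | _ n ih =>
    rcases Nat.lt_or_ge n 2 with h1 | h2
    · obtain rfl : n = 1 := by omega
      refine ⟨[A], [B], ?_⟩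
      simp [blockSeq, aStar_one, stern, aseq]
    · rcases Nat.even_or_odd' n with ⟨i, rfl | rfl⟩
      · -- n + 1 = 2 i + 1
        have hi : 1 ≤ i := by omega
        obtain ⟨P, Q, hT, hP, hQ, pP, pQ, pU, pV, lU, lV⟩ := ih i (by omega) hi
        rw [aStar_two_mul i hi, aseq_odd, blockSeq_odd A B i hi, stern_odd i hi,
          stern_two_mul i hi, hT]
        generalize blockSeq A B (aStar i) = U at *
        refine ⟨U ++ P, Q, by simp, by simp [hP, lU], hQ, pU, pQ, ?_, ?_, lU, by simp [hP, hQ]; omega⟩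
        · rw [List.reverse_append, pU]
          have e : P ++ U.reverse = U ++ P := by
            rw [List.reverse_append, pP] at pU; exact pU
          rw [List.append_assoc, e]
        · simp [pP, pQ]
      · have hi : 1 ≤ i := by omega
        obtain ⟨P, Q, hT, hP, hQ, pP, pQ, pU, pV, lU, lV⟩ := ih i (by omega) hi
        rw [show 2 * i + 1 + 1 = 2 * (i + 1) by ring, aStar_odd i hi,
          aseq_two_mul _ (by omega), blockSeq_even A B _ (by omega), stern_odd i hi,
          stern_two_mul _ (by omega), hT]
        have lT : (P ++ Q).length = stern i + stern (i + 1) := by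
          simp [hP, hQ]; omega
        generalize blockSeq A B (aseq (i + 1)) = V at *
        refine ⟨P, Q ++ V, by simp, hP, by simp [hQ, lV], pP, pV, by simp [pP, pQ], ?_, lT, lV⟩
        rw [List.reverse_append, pV]
        have e : V.reverse ++ Q = Q ++ V := by
          rw [List.reverse_append, pQ] at pV; exact pV
        rw [← List.append_assoc, e]

theorem even_pal_split {α : Type*} (c : List α) (hc : c.reverse = c) (he : Even c.length) :
    (c.drop (c.length / 2)).reverse = c.take (c.length / 2) := by
  obtain ⟨m, hm⟩ := he
  rw [List.reverse_drop, hc]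
  congr 1; omega

theorem final_pal {α : Type*} (L P Q : List (List α))
    (hL : ∀ x ∈ L, x.reverse = x ∧ Even x.length) (h : L = P ++ Q)
    (pP : P.reverse = P) (pQ : Q.reverse = Q) (m : ℕ) (hP : P.length = 2 * m + 1) :
    (((L.rotate m).headD []).drop (((L.rotate m).headD []).length / 2) ++
        ((L.rotate m).tail).flatten ++
        ((L.rotate m).headD []).take (((L.rotate m).headD []).length / 2)).reverse =
      ((L.rotate m).headD []).drop (((L.rotate m).headD []).length / 2) ++
        ((L.rotate m).tail).flatten ++
        ((L.rotate m).headD []).take (((L.rotate m).headD []).length / 2) := by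
  obtain ⟨c, X, Y, hX, hPe⟩ : ∃ c X Y, X.length = m ∧ P = X ++ c :: Y := by
    refine ⟨P[m], P.take m, P.drop (m + 1), by simp; omega, ?_⟩
    rw [← List.drop_eq_getElem_cons, List.take_append_drop]
  have hXY : Y.reverse = X := by
    have hlen : Y.length = m := by
      rw [hPe] at hP; simp at hP; omega
    rw [hPe] at pP
    simp only [List.reverse_append, List.reverse_cons, List.append_assoc] at pP
    exact (List.append_inj pP (by simp; omega)).1
  have hrot : L.rotate m = c :: (Y ++ Q ++ X) := by
    rw [h, hPe, ← hX, List.append_assoc, List.rotate_append_length_eq]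
    simp
  have hmem : ∀ x ∈ L.rotate m, x.reverse = x ∧ Even x.length := by
    intro x hx; exact hL x (List.mem_rotate.1 hx)
  rw [hrot] at hmem ⊢
  obtain ⟨hc, hce⟩ := hmem c (by simp)
  have h1 := even_pal_split c hc hce
  have h2 : (c.take (c.length / 2)).reverse = c.drop (c.length / 2) := by
    rw [← h1, List.reverse_reverse]
  have h3 : ((Y ++ Q ++ X).flatten).reverse = (Y ++ Q ++ X).flatten := by
    have hr : (Y ++ Q ++ X).reverse = Y ++ Q ++ X := by
      rw [← hXY]; simp [pQ]
    have hm : (Y ++ Q ++ X).map List.reverse = Y ++ Q ++ X := by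
      conv_rhs => rw [← List.map_id (Y ++ Q ++ X)]
      apply List.map_congr_left
      intro x hx
      exact (hmem x (List.mem_cons_of_mem _ hx)).1
    rw [List.reverse_flatten, hm, hr]
  simp only [List.headD_cons, List.tail_cons]
  rw [List.reverse_append, List.reverse_append, h1, h2, h3]
  simp only [List.append_assoc]

/-- if `A`, `B` are palindromic of even length and `d(n)` is odd, with
`k = (d(n)+1)/2`, the list `⌈Λ_k⌉ ⊕ Λ_{k+1} ⊕ … ⊕ Λ_N ⊕ Λ_1 ⊕ … ⊕ Λ_{k−1} ⊕ ⌊Λ_k⌋`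
is palindromic.  Here `R = (T(n)).rotate (k-1)` has head `Λ_k` and tail
`Λ_{k+1}, …, Λ_N, Λ_1, …, Λ_{k−1}`; `⌊Λ⌋` is the first `⌊m/2⌋` entries and `⌈Λ⌉`
the last `⌈m/2⌉` entries of `Λ`. -/
theorem stmt1 {α : Type*} (A B : List α) (hA : A.reverse = A) (hB : B.reverse = B)
    (hAe : Even A.length) (hBe : Even B.length)
    (n : ℕ) (hn : 1 ≤ n) (hd : Odd (stern n)) :
    ((((blockSeq A B n).rotate ((stern n + 1) / 2 - 1)).headD []).drop
          ((((blockSeq A B n).rotate ((stern n + 1) / 2 - 1)).headD []).length / 2) ++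
        (((blockSeq A B n).rotate ((stern n + 1) / 2 - 1)).tail).flatten ++
        (((blockSeq A B n).rotate ((stern n + 1) / 2 - 1)).headD []).take
          ((((blockSeq A B n).rotate ((stern n + 1) / 2 - 1)).headD []).length / 2)).reverse =
      (((blockSeq A B n).rotate ((stern n + 1) / 2 - 1)).headD []).drop
          ((((blockSeq A B n).rotate ((stern n + 1) / 2 - 1)).headD []).length / 2) ++
        (((blockSeq A B n).rotate ((stern n + 1) / 2 - 1)).tail).flatten ++
        (((blockSeq A B n).rotate ((stern n + 1) / 2 - 1)).headD []).take
          ((((blockSeq A B n).rotate ((stern n + 1) / 2 - 1)).headD []).length / 2) := by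
  obtain ⟨m, hm⟩ := hd
  have hk : (stern n + 1) / 2 - 1 = m := by omega
  rw [hk]
  have hL : ∀ x ∈ blockSeq A B n, x.reverse = x ∧ Even x.length := by
    intro x hx
    rcases blockSeq_mem A B n x hx with rfl | rfl
    · exact ⟨hA, hAe⟩
    · exact ⟨hB, hBe⟩
  rcases Nat.lt_or_ge n 2 with h1 | h2
  · obtain rfl : n = 1 := by omega
    exact final_pal _ [B] [] hL (by simp [blockSeq]) (by simp) (by simp) m
      (by rw [← hm]; simp [stern])
  · obtain ⟨i, rfl⟩ : ∃ i, n = i + 1 := ⟨n - 1, by omega⟩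
    obtain ⟨P, Q, hT, hP, -, pP, pQ, -⟩ := block_inv A B i (by omega)
    exact final_pal _ P Q hL hT pP pQ m (by rw [hP, hm])
end

section
/- Let α be a type and A, B lists over α. Let i ≥ 2 be an integer, let q ≥ 3 be odd, set k = 2^{i−1}·q (an even integer) and m = (q+1)/2. Then S_{A,B}(k) = S(a*(m−1)) ⊕ S(m)^i, where S(m)^i denotes the concatenation of i copies of S(m). -/
theorem aux_aseq (m : ℕ) (hm : 1 ≤ m) (j : ℕ) : aseq (2 ^ j * (2 * m + 1)) = m + 1 := by
  induction j with
  | zero =>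
    obtain ⟨n, hn⟩ : ∃ n, 2 ^ 0 * (2 * m + 1) = n + 2 := ⟨2 * m - 1, by omega⟩
    rw [hn, aseq, if_neg (by omega)]
    omega
  | succ j ih =>
    have hp : 0 < 2 ^ j * (2 * m + 1) := by positivity
    have h2 : 2 ^ (j + 1) * (2 * m + 1) = 2 * (2 ^ j * (2 * m + 1)) := by ring
    rw [h2]
    generalize 2 ^ j * (2 * m + 1) = t at *
    obtain ⟨n, hn⟩ : ∃ n, 2 * t = n + 2 := ⟨2 * t - 2, by omega⟩
    rw [hn, aseq, if_pos (by omega), ← hn, Nat.mul_div_cancel_left _ (by omega), ih]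

theorem aux_mseq {α : Type*} (A B : List α) (m : ℕ) (hm : 1 ≤ m) (j : ℕ) :
    mseq A B (2 ^ j * (2 * m + 1)) = mseq A B (aStar m) ++
        (List.replicate (j + 1) (mseq A B (m + 1))).flatten := by
  induction j with
  | zero =>
    obtain ⟨n, hn⟩ : ∃ n, 2 ^ 0 * (2 * m + 1) = n + 3 := ⟨2 * m - 2, by omega⟩
    have h1 : (n + 4) / 2 = m + 1 := by omega
    rw [hn, mseq, if_neg (by omega), h1]
    simp
  | succ j ih =>
    have ha := aux_aseq m hm j
    have hp : 3 ≤ 2 ^ j * (2 * m + 1) := by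
      have : 0 < 2 ^ j := by positivity
      nlinarith
    have h2 : 2 ^ (j + 1) * (2 * m + 1) = 2 * (2 ^ j * (2 * m + 1)) := by ring
    rw [h2]
    generalize 2 ^ j * (2 * m + 1) = t at *
    obtain ⟨n, hn⟩ : ∃ n, 2 * t = n + 3 := ⟨2 * t - 3, by omega⟩
    rw [hn, mseq, if_pos (by omega), ← hn, Nat.mul_div_cancel_left _ (by omega), ih, ha,
      List.replicate_succ' (n := j + 1)]
    simp

/-- for `i ≥ 2`, odd `q ≥ 3`, `k = 2^{i−1}·q` and `m = (q+1)/2`,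
`S_{A,B}(k) = S(a*(m−1)) ⊕ S(m)^i`. -/
theorem stmt11 {α : Type*} (A B : List α) (i q : ℕ) (hi : 2 ≤ i) (hq : 3 ≤ q)
    (hodd : Odd q) :
    mseq A B (2 ^ (i - 1) * q) =
      mseq A B (aStar ((q + 1) / 2 - 1)) ++
        (List.replicate i (mseq A B ((q + 1) / 2))).flatten := by
  obtain ⟨m, rfl⟩ := hodd
  obtain ⟨j, rfl⟩ : ∃ j, i = j + 1 := ⟨i - 1, by omega⟩
  have h1 : (2 * m + 1 + 1) / 2 = m + 1 := by omega
  rw [h1]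
  exact aux_mseq A B m (by omega) j
end

section
/- Let α be a type and A, B lists over α. Then for every q ≥ 2 and every t ≥ 0, one has S_{A,B}(2^t · q) = S(q) ⊕ S(a(q))^t, where S(a(q))^t denotes the concatenation of t copies of S(a(q)). -/
theorem aseq_two_mul_s13 (n : ℕ) (hn : 1 ≤ n) : aseq (2 * n) = aseq n := by
  obtain ⟨m, rfl⟩ : ∃ m, n = m + 1 := ⟨n - 1, by omega⟩
  rw [show 2 * (m + 1) = 2 * m + 2 by ring, aseq, if_pos (by omega)]
  congr 1
  omega

theorem aseq_pow_mul (t n : ℕ) (hn : 1 ≤ n) : aseq (2 ^ t * n) = aseq n := by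
  induction t with
  | zero => simp
  | succ t ih =>
    rw [pow_succ', mul_assoc, aseq_two_mul_s13 _ (Nat.mul_pos (by positivity) hn), ih]

theorem mseq_two_mul {α : Type*} (A B : List α) (n : ℕ) (hn : 2 ≤ n) :
    mseq A B (2 * n) = mseq A B n ++ mseq A B (aseq n) := by
  obtain ⟨m, rfl⟩ : ∃ m, n = m + 2 := ⟨n - 2, by omega⟩
  rw [show 2 * (m + 2) = (2 * m + 1) + 3 by ring, mseq, if_pos (by omega),
    show (2 * m + 1 + 3) / 2 = m + 2 by omega]

/-- for every `q ≥ 2` and `t ≥ 0`,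
`S_{A,B}(2^t · q) = S(q) ⊕ S(a(q))^t`. -/
theorem stmt13 {α : Type*} (A B : List α) (q t : ℕ) (hq : 2 ≤ q) :
    mseq A B (2 ^ t * q) =
      mseq A B q ++ (List.replicate t (mseq A B (aseq q))).flatten := by
  induction t with
  | zero => simp
  | succ t ih =>
    have h1 : 1 ≤ 2 ^ t := Nat.one_le_two_pow
    rw [pow_succ', mul_assoc, mseq_two_mul A B _ (by nlinarith), ih,
      aseq_pow_mul t q (by omega), List.replicate_succ']
    simp
end
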